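/- For every positive integer k with k ≤ N−1, the number of functions f ∈ F_N with global orbit pattern [k, 1] equals the number of functions f ∈ F_N with global orbit pattern [k+1]. -/

import Mathlib

open scoped Classical

/-- Two points are in the same component of `X_N` under `f`:
`x ~ y` iff some forward iterate of `x` equals some forward iterate of `y`. -/
def sameComp {N : ℕ} (f : Fin N → Fin N) (x y : Fin N) : Prop :=
  ∃ k l : ℕ, f^[k] x = f^[l] y

/-- The order `ω(x, f)` of a point `x`: the length of the periodic cycle contained in
the component of `x`, i.e. the least `p > 0` such that the orbit of `x` is eventually
`p`-periodic. -/
noncomputable def gopOrd {N : ℕ} (f : Fin N → Fin N) (x : Fin N) : ℕ :=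
  sInf {p : ℕ | 0 < p ∧ ∃ K : ℕ, f^[K + p] x = f^[K] x}

/-- The global orbit pattern of `f`: the list of orders of the least elements of the
components of `X_N` under `f`, listed in increasing order of those least elements. -/
noncomputable def gop {N : ℕ} (f : Fin N → Fin N) : List ℕ :=
  ((Finset.univ.filter (fun x : Fin N => ∀ y : Fin N, sameComp f x y → x ≤ y)).sort (· ≤ ·)).map
    (gopOrd f)

/-!
Composing `f` with the transposition of two periodic points `c` and `a` permutes the periodic points
again, so neither their set nor the point at which the orbit of `0` first meets it changes; the
union of the components of `c` and `a` is unchanged as well.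

Let `c` be the first periodic point on the orbit of `0`. Pattern `[k, 1]` means that there are
`k + 1` periodic points and that some fixed point `a ≠ c` lies in the only component other than
that of `c`. Pattern `[k + 1]` means that there are `k + 1` periodic points, all in one component,
and then `a = f c` differs from `c` because `k ≥ 1`. Either way the components of `c` and `a` cover
everything, and the only difference is whether `f a = a` or `f c = a`. The involution
`(f, c, a) ↦ (f ∘ swap c a, c, a)` preserves the common part and exchanges these two equations: it
inserts the fixed point `a` into the cycle of `c`, or cuts it out again.
-/

open Function Finset

section PeriodicPts

variable {α : Type*} {f g : α → α} {a c x : α}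

lemma iterate_mem_periodicPts (hx : x ∈ periodicPts f) (n : ℕ) : f^[n] x ∈ periodicPts f :=
  (bijOn_periodicPts f).mapsTo.iterate n hx

lemma iterate_eq_iterate_of_forall_lt {n : ℕ} (h : ∀ i < n, g (f^[i] x) = f (f^[i] x)) :
    g^[n] x = f^[n] x := by
  induction n with
  | zero => rfl
  | succ n ih =>
    rw [iterate_succ_apply', iterate_succ_apply', ih fun i hi => h i (hi.trans n.lt_succ_self),
      h n n.lt_succ_self]

lemma subset_periodicPts_of_mapsTo_injOn {s : Set α} (hs : s.Finite) (hmaps : Set.MapsTo f s s)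
    (hinj : Set.InjOn f s) : s ⊆ periodicPts f := by
  have := hs.to_subtype
  intro x hx
  have hper : (⟨x, hx⟩ : s) ∈ periodicPts (hmaps.restrict f s s) :=
    (hmaps.restrict_inj.2 hinj).mem_periodicPts _
  exact Semiconj.mapsTo_periodicPts (g := Subtype.val) (fun _ => rfl) hper

/-- The number of steps after which the orbit of `x` under `f` first meets a periodic point; it has
the junk value `0` if this never happens. -/
noncomputable def preperiod (f : α → α) (x : α) : ℕ :=
  sInf {n | f^[n] x ∈ periodicPts f}

/-- The first periodic point on the orbit of `x` under `f`, at which this orbit enters its cycle; it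
has the junk value `x` if the orbit contains no periodic point. -/
noncomputable def entryPt (f : α → α) (x : α) : α :=
  f^[preperiod f x] x

lemma iterate_preperiod_eq_of_eqOn_compl (h : Set.EqOn g f (periodicPts f)ᶜ) (x : α) :
    g^[preperiod f x] x = entryPt f x :=
  iterate_eq_iterate_of_forall_lt fun _ hi => h (Nat.notMem_of_lt_sInf hi)

lemma comp_swap_comp_swap [DecidableEq α] (f : α → α) (c a : α) :
    (f ∘ Equiv.swap c a) ∘ Equiv.swap c a = f := by
  ext x
  simp

variable [Finite α]

lemma exists_iterate_mem_periodicPts (f : α → α) (x : α) : ∃ n, f^[n] x ∈ periodicPts f := by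
  obtain ⟨m, n, hmn, h⟩ := Set.finite_univ.exists_lt_map_eq_of_forall_mem
    (f := fun n : ℕ => f^[n] x) fun _ => Set.mem_univ _
  refine ⟨m, mk_mem_periodicPts (Nat.sub_pos_of_lt hmn) ?_⟩
  rw [IsPeriodicPt, IsFixedPt, ← iterate_add_apply, Nat.sub_add_cancel hmn.le]
  exact h.symm

lemma entryPt_mem_periodicPts (f : α → α) (x : α) : entryPt f x ∈ periodicPts f :=
  Nat.sInf_mem (exists_iterate_mem_periodicPts f x)

lemma preperiod_le_of_eqOn_compl (hP : periodicPts g = periodicPts f)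
    (h : Set.EqOn g f (periodicPts f)ᶜ) (x : α) : preperiod g x ≤ preperiod f x :=
  Nat.sInf_le <| by
    rw [Set.mem_ofPred_eq, iterate_preperiod_eq_of_eqOn_compl h, hP]
    exact entryPt_mem_periodicPts f x

lemma entryPt_eq_of_eqOn_compl (hP : periodicPts g = periodicPts f)
    (h : Set.EqOn g f (periodicPts f)ᶜ) (x : α) : entryPt g x = entryPt f x := by
  have hpre : preperiod g x = preperiod f x :=
    (preperiod_le_of_eqOn_compl hP h x).antisymm
      (preperiod_le_of_eqOn_compl hP.symm (hP ▸ h.symm) x)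
  rw [entryPt, hpre, iterate_preperiod_eq_of_eqOn_compl h]

variable [DecidableEq α]

lemma periodicPts_subset_periodicPts_comp_swap (hc : c ∈ periodicPts f) (ha : a ∈ periodicPts f) :
    periodicPts f ⊆ periodicPts (f ∘ Equiv.swap c a) := by
  have hswap : Set.MapsTo (Equiv.swap c a) (periodicPts f) (periodicPts f) := fun x hx => by
    rw [Equiv.swap_apply_def]
    split_ifs <;> assumption
  exact subset_periodicPts_of_mapsTo_injOn (Set.toFinite _)
    ((bijOn_periodicPts f).mapsTo.comp hswap)
    ((bijOn_periodicPts f).injOn.comp (Equiv.injective _).injOn hswap)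

lemma periodicPts_comp_swap (hc : c ∈ periodicPts f) (ha : a ∈ periodicPts f) :
    periodicPts (f ∘ Equiv.swap c a) = periodicPts f := by
  have hsub := periodicPts_subset_periodicPts_comp_swap hc ha
  have hsup := periodicPts_subset_periodicPts_comp_swap (hsub hc) (hsub ha)
  rw [comp_swap_comp_swap] at hsup
  exact hsup.antisymm hsub

lemma entryPt_comp_swap (hc : c ∈ periodicPts f) (ha : a ∈ periodicPts f) (x : α) :
    entryPt (f ∘ Equiv.swap c a) x = entryPt f x :=
  entryPt_eq_of_eqOn_compl (periodicPts_comp_swap hc ha) (fun y hy => by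
    rw [comp_apply, Equiv.swap_apply_of_ne_of_ne (ne_of_mem_of_not_mem hc hy).symm
      (ne_of_mem_of_not_mem ha hy).symm]) x

end PeriodicPts

section Components

variable {N : ℕ} {f : Fin N → Fin N} {a c x y z : Fin N}

namespace sameComp

protected lemma refl (f : Fin N → Fin N) (x : Fin N) : sameComp f x x :=
  ⟨0, 0, rfl⟩

protected lemma symm : sameComp f x y → sameComp f y x
  | ⟨k, l, h⟩ => ⟨l, k, h.symm⟩

protected lemma trans : sameComp f x y → sameComp f y z → sameComp f x z
  | ⟨k, l, h⟩, ⟨m, n, h'⟩ => ⟨m + k, l + n, by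
      rw [iterate_add_apply, h, ← iterate_add_apply, add_comm m l, iterate_add_apply, h',
        ← iterate_add_apply]⟩

lemma iterate_right (f : Fin N → Fin N) (x : Fin N) (n : ℕ) : sameComp f x (f^[n] x) :=
  ⟨n, 0, rfl⟩

lemma entryPt_right (f : Fin N → Fin N) (x : Fin N) : sameComp f x (entryPt f x) :=
  iterate_right f x _

lemma congr_left (h : sameComp f x y) : sameComp f x z ↔ sameComp f y z :=
  ⟨h.symm.trans, h.trans⟩

lemma congr_right (h : sameComp f y z) : sameComp f x y ↔ sameComp f x z :=
  ⟨fun h' => h'.trans h, fun h' => h'.trans h.symm⟩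

lemma iff_of_forall_apply_iff {p : Fin N → Prop} (hp : ∀ z, p (f z) ↔ p z)
    (h : sameComp f x y) : p x ↔ p y := by
  have hiter (n : ℕ) (z : Fin N) : p (f^[n] z) ↔ p z := by
    induction n with
    | zero => rfl
    | succ n ih => rw [iterate_succ_apply', hp, ih]
  obtain ⟨k, l, h⟩ := h
  rw [← hiter k, h, hiter]

lemma exists_iterate_eq (hy : y ∈ periodicPts f) (h : sameComp f x y) : ∃ n, f^[n] x = y := by
  obtain ⟨k, l, h⟩ := h
  obtain ⟨p, hp, hpy⟩ := hy
  -- `l * p - l` further steps complete `l` turns around the cycle of `y`.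
  refine ⟨(l * p - l) + k, ?_⟩
  rw [iterate_add_apply, h, ← iterate_add_apply, Nat.sub_add_cancel (Nat.le_mul_of_pos_right l hp)]
  exact hpy.const_mul l

lemma eq_of_isFixedPt (hx : x ∈ periodicPts f) (ha : IsFixedPt f a) (h : sameComp f x a) :
    x = a := by
  obtain ⟨n, hn⟩ := h.symm.exists_iterate_eq hx
  rw [← hn, iterate_fixed ha]

lemma minimalPeriod_eq (hx : x ∈ periodicPts f) (hy : y ∈ periodicPts f) (h : sameComp f x y) :
    minimalPeriod f x = minimalPeriod f y := by
  obtain ⟨n, rfl⟩ := h.exists_iterate_eq hy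
  exact (minimalPeriod_apply_iterate hx n).symm

end sameComp

lemma sameComp_or_sameComp_of_comp_swap
    (h : sameComp (f ∘ Equiv.swap c a) x c ∨ sameComp (f ∘ Equiv.swap c a) x a) :
    sameComp f x c ∨ sameComp f x a := by
  -- The steps of `f ∘ swap c a` from `c` and `a` exchange the targets `f c` and `f a`, so they stay
  -- inside the union of the two components.
  have hinv (z : Fin N) : sameComp f ((f ∘ Equiv.swap c a) z) c ∨
      sameComp f ((f ∘ Equiv.swap c a) z) a ↔ sameComp f z c ∨ sameComp f z a := by
    have hstep (y : Fin N) : sameComp f (f y) y := (sameComp.iterate_right f y 1).symm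
    rcases eq_or_ne z c with rfl | hzc
    · simp [hstep, sameComp.refl]
    rcases eq_or_ne z a with rfl | hza
    · simp [hstep, sameComp.refl]
    · rw [comp_apply, Equiv.swap_apply_of_ne_of_ne hzc hza, (hstep z).congr_left,
        (hstep z).congr_left]
  have htransfer {y : Fin N} (hxy : sameComp (f ∘ Equiv.swap c a) x y) :
      sameComp f x c ∨ sameComp f x a ↔ sameComp f y c ∨ sameComp f y a :=
    hxy.iff_of_forall_apply_iff (p := fun z => sameComp f z c ∨ sameComp f z a) hinv
  rcases h with h | h
  · exact (htransfer h).2 (Or.inl (sameComp.refl f c))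
  · exact (htransfer h).2 (Or.inr (sameComp.refl f a))

end Components

section Order

variable {N : ℕ} {f : Fin N → Fin N} {c x y : Fin N}

lemma gopOrd_eq_minimalPeriod (hc : c ∈ periodicPts f) (h : sameComp f x c) :
    gopOrd f x = minimalPeriod f c := by
  have hiff (p K : ℕ) : f^[K + p] x = f^[K] x ↔ IsPeriodicPt f p (f^[K] x) := by
    rw [add_comm, iterate_add_apply, IsPeriodicPt, IsFixedPt]
  have hmem : minimalPeriod f c ∈ {p | 0 < p ∧ ∃ K, f^[K + p] x = f^[K] x} := by
    obtain ⟨n, rfl⟩ := h.exists_iterate_eq hc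
    exact ⟨minimalPeriod_pos_of_mem_periodicPts hc, n,
      (hiff _ _).2 (isPeriodicPt_minimalPeriod f _)⟩
  refine (Nat.sInf_le hmem).antisymm (le_csInf ⟨_, hmem⟩ ?_)
  rintro p ⟨hp, K, hK⟩
  have hper : IsPeriodicPt f p (f^[K] x) := (hiff p K).1 hK
  have hcomp : sameComp f (f^[K] x) c := (sameComp.iterate_right f x K).symm.trans h
  rw [← hcomp.minimalPeriod_eq (mk_mem_periodicPts hp hper) hc]
  exact hper.minimalPeriod_le hp

lemma sameComp.gopOrd_eq (h : sameComp f x y) : gopOrd f x = gopOrd f y := by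
  have hy := sameComp.entryPt_right f y
  have hper := entryPt_mem_periodicPts f y
  rw [gopOrd_eq_minimalPeriod hper (h.trans hy), gopOrd_eq_minimalPeriod hper hy]

lemma isFixedPt_entryPt_iff_gopOrd_eq_one : IsFixedPt f (entryPt f x) ↔ gopOrd f x = 1 := by
  rw [gopOrd_eq_minimalPeriod (entryPt_mem_periodicPts f x) (sameComp.entryPt_right f x),
    minimalPeriod_eq_one_iff_isFixedPt]

lemma card_periodicPts_inter_sameComp (f : Fin N → Fin N) (x : Fin N) :
    #{y | y ∈ periodicPts f ∧ sameComp f x y} = gopOrd f x := by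
  set c := entryPt f x
  have hc : c ∈ periodicPts f := entryPt_mem_periodicPts f x
  have hxc : sameComp f x c := sameComp.entryPt_right f x
  have himage : ({y | y ∈ periodicPts f ∧ sameComp f x y} : Finset (Fin N)) =
      (range (minimalPeriod f c)).image (f^[·] c) := by
    ext y
    simp only [mem_filter, mem_univ, true_and, mem_image, mem_range]
    constructor
    · rintro ⟨hy, hxy⟩
      obtain ⟨n, rfl⟩ := (hxc.symm.trans hxy).exists_iterate_eq hy
      exact ⟨n % minimalPeriod f c, Nat.mod_lt _ (minimalPeriod_pos_of_mem_periodicPts hc),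
        iterate_mod_minimalPeriod_eq⟩
    · rintro ⟨n, -, rfl⟩
      exact ⟨iterate_mem_periodicPts hc n, hxc.trans (sameComp.iterate_right f c n)⟩
  have hinj : Set.InjOn (f^[·] c) (range (minimalPeriod f c) : Set ℕ) := by
    rw [coe_range]
    exact iterate_injOn_Iio_minimalPeriod
  rw [himage, card_image_of_injOn hinj, card_range, gopOrd_eq_minimalPeriod hc hxc]

end Order

lemma sort_eq_singleton_iff {α : Type*} [LinearOrder α] {s : Finset α} {a : α} :
    s.sort (· ≤ ·) = [a] ↔ s = {a} := by
  refine ⟨fun h => ?_, fun h => by rw [h, sort_singleton]⟩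
  rw [← s.sort_toFinset (· ≤ ·), h, List.toFinset_cons, List.toFinset_nil, insert_empty_eq]

section ComponentMins

variable {N : ℕ} {f : Fin N → Fin N} {l m : ℕ} {b x y : Fin N}

/-- The least elements of the components of `f`. -/
noncomputable def componentMins (f : Fin N → Fin N) : Finset (Fin N) :=
  {x | ∀ y, sameComp f x y → x ≤ y}

lemma mem_componentMins : x ∈ componentMins f ↔ ∀ y, sameComp f x y → x ≤ y := by
  simp [componentMins]

lemma exists_mem_componentMins (f : Fin N → Fin N) (x : Fin N) :
    ∃ b ∈ componentMins f, sameComp f x b := by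
  obtain ⟨b, hxb, hmin⟩ := Set.exists_min_image {y | sameComp f x y} id (Set.toFinite _)
    ⟨x, sameComp.refl f x⟩
  exact ⟨b, mem_componentMins.2 fun y hby => hmin y (hxb.trans hby), hxb⟩

lemma sameComp.eq_of_mem_componentMins (hx : x ∈ componentMins f) (hy : y ∈ componentMins f)
    (h : sameComp f x y) : x = y :=
  (mem_componentMins.1 hx y h).antisymm (mem_componentMins.1 hy x h.symm)

lemma sum_gop (f : Fin N → Fin N) : (gop f).sum = (periodicPts f).ncard := by
  have hunion : (componentMins f).biUnion (fun b => {y | y ∈ periodicPts f ∧ sameComp f b y}) =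
      ({y | y ∈ periodicPts f} : Finset (Fin N)) := by
    ext y
    obtain ⟨b, hb, hyb⟩ := exists_mem_componentMins f y
    simp only [mem_biUnion, mem_filter, mem_univ, true_and]
    exact ⟨fun ⟨_, _, hy, _⟩ => hy, fun hy => ⟨b, hb, hy, hyb.symm⟩⟩
  have hdisj : Set.PairwiseDisjoint (componentMins f : Set (Fin N))
      fun b => ({y | y ∈ periodicPts f ∧ sameComp f b y} : Finset (Fin N)) := by
    intro b hb d hd hbd
    simp only [onFun, disjoint_filter]
    exact fun y _ hby hdy => hbd ((hby.2.trans hdy.2.symm).eq_of_mem_componentMins hb hd)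
  calc (gop f).sum = ∑ b ∈ componentMins f, gopOrd f b := by
        rw [← sum_map_toList]
        exact ((sort_perm_toList _ _).map _).sum_eq
    _ = #{y | y ∈ periodicPts f} := by
        rw [← hunion, card_biUnion hdisj]
        simp only [card_periodicPts_inter_sameComp]
    _ = (periodicPts f).ncard := by
        rw [← Set.ncard_coe_finset, coe_filter_univ, Set.ofPred_mem_eq]

variable [NeZero N]

lemma zero_mem_componentMins (f : Fin N → Fin N) : 0 ∈ componentMins f :=
  mem_componentMins.2 fun y _ => Fin.zero_le y

lemma gop_eq_cons (f : Fin N → Fin N) :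
    gop f = gopOrd f 0 :: (((componentMins f).erase 0).sort (· ≤ ·)).map (gopOrd f) := by
  rw [← List.map_cons, ← sort_insert _ (fun b _ => Fin.zero_le b) (notMem_erase _ _),
    insert_erase (zero_mem_componentMins f)]
  rfl

lemma componentMins_erase_zero_eq_empty_iff :
    (componentMins f).erase 0 = ∅ ↔ ∀ x, sameComp f x 0 := by
  rw [erase_eq_empty_iff, or_iff_right (ne_empty_of_mem (zero_mem_componentMins f))]
  constructor
  · intro h x
    obtain ⟨b, hb, hxb⟩ := exists_mem_componentMins f x
    rw [h, mem_singleton] at hb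
    exact hb ▸ hxb
  · exact fun h => eq_singleton_iff_unique_mem.2 ⟨zero_mem_componentMins f,
      fun b hb => (h b).eq_of_mem_componentMins hb (zero_mem_componentMins f)⟩

lemma componentMins_erase_zero_eq_singleton_iff :
    (componentMins f).erase 0 = {b} ↔
      b ∈ componentMins f ∧ ¬ sameComp f b 0 ∧ ∀ x, sameComp f x 0 ∨ sameComp f x b := by
  have hzero := zero_mem_componentMins f
  rw [eq_singleton_iff_unique_mem]
  simp only [mem_erase]
  constructor
  · rintro ⟨⟨hb0, hb⟩, huniq⟩
    refine ⟨hb, fun h => hb0 (h.eq_of_mem_componentMins hb hzero), fun x => ?_⟩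
    obtain ⟨d, hd, hxd⟩ := exists_mem_componentMins f x
    rcases eq_or_ne d 0 with rfl | hd0
    · exact Or.inl hxd
    · exact Or.inr (huniq d ⟨hd0, hd⟩ ▸ hxd)
  · rintro ⟨hb, hb0, hcover⟩
    refine ⟨⟨fun h => hb0 (h ▸ sameComp.refl f b), hb⟩, fun d ⟨hd0, hd⟩ => ?_⟩
    rcases hcover d with h | h
    · exact absurd (h.eq_of_mem_componentMins hd hzero) hd0
    · exact h.eq_of_mem_componentMins hd hb

lemma gop_eq_singleton_iff :
    gop f = [m] ↔ (∀ x, sameComp f x 0) ∧ gopOrd f 0 = m := by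
  rw [gop_eq_cons, List.cons.injEq, List.map_eq_nil_iff, ← componentMins_erase_zero_eq_empty_iff,
    ← List.toFinset_eq_empty_iff, sort_toFinset, and_comm]

lemma gop_eq_pair_iff :
    gop f = [l, m] ↔ ∃ a, (¬ sameComp f a 0 ∧ ∀ x, sameComp f x 0 ∨ sameComp f x a) ∧
      gopOrd f 0 = l ∧ gopOrd f a = m := by
  simp only [gop_eq_cons, List.cons.injEq, List.map_eq_singleton_iff, sort_eq_singleton_iff,
    componentMins_erase_zero_eq_singleton_iff]
  constructor
  · rintro ⟨hl, b, ⟨-, hb⟩, hm⟩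
    exact ⟨b, hb, hl, hm⟩
  · rintro ⟨a, ⟨ha0, hcover⟩, hl, hm⟩
    obtain ⟨b, hb, hab⟩ := exists_mem_componentMins f a
    refine ⟨hl, b, ⟨hb, fun h => ha0 (hab.trans h), fun x => ?_⟩, hab.gopOrd_eq ▸ hm⟩
    exact (hcover x).imp_right fun h => h.trans hab

end ComponentMins

section MarkedPairs

variable {N : ℕ} [NeZero N] {f : Fin N → Fin N} {a c : Fin N} {k m : ℕ}

/-- What the patterns `[m - 1, 1]` and `[m]` have in common: `f` has `m` periodic points, the orbit
of `0` enters its cycle at `c`, and `a ≠ c` is a periodic point such that every component is that of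
`c` or that of `a`. The two components may coincide. -/
structure IsMarkedPair (m : ℕ) (f : Fin N → Fin N) (c a : Fin N) : Prop where
  entryPt_zero : entryPt f 0 = c
  mem_periodicPts : a ∈ periodicPts f
  ne : c ≠ a
  cover : ∀ x, sameComp f x c ∨ sameComp f x a
  ncard_periodicPts : (periodicPts f).ncard = m

namespace IsMarkedPair

lemma left_mem_periodicPts (h : IsMarkedPair m f c a) : c ∈ periodicPts f :=
  h.entryPt_zero ▸ entryPt_mem_periodicPts f 0

lemma sameComp_zero (h : IsMarkedPair m f c a) : sameComp f 0 c :=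
  h.entryPt_zero ▸ sameComp.entryPt_right f 0

protected lemma comp_swap (h : IsMarkedPair m f c a) :
    IsMarkedPair m (f ∘ Equiv.swap c a) c a where
  entryPt_zero := by
    rw [entryPt_comp_swap h.left_mem_periodicPts h.mem_periodicPts, h.entryPt_zero]
  mem_periodicPts := by
    rw [periodicPts_comp_swap h.left_mem_periodicPts h.mem_periodicPts]
    exact h.mem_periodicPts
  ne := h.ne
  cover x := sameComp_or_sameComp_of_comp_swap <| by
    rw [comp_swap_comp_swap]
    exact h.cover x
  ncard_periodicPts := by
    rw [periodicPts_comp_swap h.left_mem_periodicPts h.mem_periodicPts, h.ncard_periodicPts]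

end IsMarkedPair

lemma isMarkedPair_comp_swap_iff :
    IsMarkedPair m (f ∘ Equiv.swap c a) c a ↔ IsMarkedPair m f c a :=
  ⟨fun h => comp_swap_comp_swap f c a ▸ h.comp_swap, IsMarkedPair.comp_swap⟩

lemma rightUnique_isMarkedPair_isFixedPt (m : ℕ) :
    Relator.RightUnique fun (f : Fin N → Fin N) (p : Fin N × Fin N) =>
      IsMarkedPair m f p.1 p.2 ∧ f p.2 = p.2 := by
  rintro f ⟨c, a⟩ ⟨c', a'⟩ ⟨h, ha : IsFixedPt f a⟩ ⟨h', ha' : IsFixedPt f a'⟩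
  obtain rfl : c = c' := h.entryPt_zero.symm.trans h'.entryPt_zero
  rcases h.cover a' with hac | haa
  · exact absurd (hac.symm.eq_of_isFixedPt h.left_mem_periodicPts ha') h'.ne
  · exact congrArg (Prod.mk c) (haa.eq_of_isFixedPt h'.mem_periodicPts ha).symm

lemma rightUnique_isMarkedPair_apply_eq (m : ℕ) :
    Relator.RightUnique fun (f : Fin N → Fin N) (p : Fin N × Fin N) =>
      IsMarkedPair m f p.1 p.2 ∧ f p.1 = p.2 := by
  rintro f ⟨c, a⟩ ⟨c', a'⟩ ⟨h, rfl : f c = a⟩ ⟨h', rfl : f c' = a'⟩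
  obtain rfl : c = c' := h.entryPt_zero.symm.trans h'.entryPt_zero
  rfl

lemma gop_eq_pair_one_iff :
    gop f = [k, 1] ↔ ∃ p : Fin N × Fin N, IsMarkedPair (k + 1) f p.1 p.2 ∧ f p.2 = p.2 := by
  constructor
  · intro hgop
    obtain ⟨b, ⟨hb0, hcover⟩, -, hb⟩ := gop_eq_pair_iff.1 hgop
    have h0 := sameComp.entryPt_right f 0
    have hba := sameComp.entryPt_right f b
    refine ⟨(entryPt f 0, entryPt f b), ⟨rfl, entryPt_mem_periodicPts f b, ?_, fun x => ?_, ?_⟩,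
      isFixedPt_entryPt_iff_gopOrd_eq_one.2 hb⟩
    · intro (h : entryPt f 0 = entryPt f b)
      exact hb0 (hba.trans (h ▸ h0.symm))
    · exact (hcover x).imp h0.congr_right.1 hba.congr_right.1
    · simp [← sum_gop, hgop]
  · rintro ⟨⟨c, a⟩, h, hfix⟩
    have ha0 : ¬ sameComp f a 0 := fun ha0 =>
      h.ne ((ha0.trans h.sameComp_zero).symm.eq_of_isFixedPt h.left_mem_periodicPts hfix)
    have hcover (x : Fin N) : sameComp f x 0 ∨ sameComp f x a :=
      (h.cover x).imp_left h.sameComp_zero.congr_right.2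
    have horder : gopOrd f a = 1 := by
      rw [gopOrd_eq_minimalPeriod h.mem_periodicPts (sameComp.refl f a)]
      exact minimalPeriod_eq_one_iff_isFixedPt.2 hfix
    have hgop : gop f = [gopOrd f 0, 1] := gop_eq_pair_iff.2 ⟨a, ⟨ha0, hcover⟩, rfl, horder⟩
    have hsum : gopOrd f 0 + 1 = k + 1 := by simpa [hgop, h.ncard_periodicPts] using sum_gop f
    rw [hgop, Nat.succ_injective hsum]

lemma gop_eq_succ_iff (hk : 1 ≤ k) :
    gop f = [k + 1] ↔ ∃ p : Fin N × Fin N, IsMarkedPair (k + 1) f p.1 p.2 ∧ f p.1 = p.2 := by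
  constructor
  · intro hgop
    obtain ⟨hcover, horder⟩ := gop_eq_singleton_iff.1 hgop
    have h0 := sameComp.entryPt_right f 0
    refine ⟨(entryPt f 0, f (entryPt f 0)), ⟨rfl, ?_, fun h => ?_, fun x => ?_, ?_⟩, rfl⟩
    · exact iterate_mem_periodicPts (entryPt_mem_periodicPts f 0) 1
    · have hone : gopOrd f 0 = 1 := isFixedPt_entryPt_iff_gopOrd_eq_one.1 h.symm
      omega
    · exact Or.inl ((hcover x).trans h0)
    · simp [← sum_gop, hgop]
  · rintro ⟨⟨c, a⟩, h, rfl : f c = a⟩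
    have hcover (x : Fin N) : sameComp f x 0 := by
      have hxc : sameComp f x c :=
        (h.cover x).elim id (sameComp.iterate_right f c 1).congr_right.2
      exact hxc.trans h.sameComp_zero.symm
    have hgop : gop f = [gopOrd f 0] := gop_eq_singleton_iff.2 ⟨hcover, rfl⟩
    have hsum : gopOrd f 0 = k + 1 := by simpa [hgop, h.ncard_periodicPts] using sum_gop f
    rw [hgop, hsum]

end MarkedPairs

lemma card_subtype_exists_eq_card_subtype_prod {α β : Type*} {r : α → β → Prop}
    (hr : Relator.RightUnique r) :
    Nat.card {a // ∃ b, r a b} = Nat.card {p : α × β // r p.1 p.2} := by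
  refine (Nat.card_congr <| Equiv.ofBijective (fun p => ⟨p.1.1, p.1.2, p.2⟩) ⟨?_, ?_⟩).symm
  · rintro ⟨⟨a, b⟩, h⟩ ⟨⟨a', b'⟩, h'⟩ heq
    obtain rfl : a = a' := congrArg Subtype.val heq
    obtain rfl := hr h h'
    rfl
  · rintro ⟨a, b, h⟩
    exact ⟨⟨(a, b), h⟩, rfl⟩

/-- for every positive integer `k ≤ N−1`, the number of `f ∈ F_N` with
global orbit pattern `[k, 1]` equals the number of `f ∈ F_N` with global orbit pattern
`[k+1]`. -/
theorem card_gop_k_one_eq_card_gop_succ (N k : ℕ) (hk : 1 ≤ k) (hkN : k ≤ N - 1) :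
    Nat.card {f : Fin N → Fin N // gop f = [k, 1]}
      = Nat.card {f : Fin N → Fin N // gop f = [k + 1]} := by
  have : NeZero N := ⟨by omega⟩
  simp only [gop_eq_pair_one_iff, gop_eq_succ_iff hk]
  rw [card_subtype_exists_eq_card_subtype_prod (rightUnique_isMarkedPair_isFixedPt _),
    card_subtype_exists_eq_card_subtype_prod (rightUnique_isMarkedPair_apply_eq _)]
  have hinv : Involutive fun t : (Fin N → Fin N) × Fin N × Fin N =>
      (t.1 ∘ Equiv.swap t.2.1 t.2.2, t.2) := fun t =>
    Prod.ext (comp_swap_comp_swap t.1 t.2.1 t.2.2) rfl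
  refine Nat.card_congr (hinv.toPerm.subtypeEquiv fun ⟨f, c, a⟩ => ?_)
  change IsMarkedPair _ f c a ∧ f a = a ↔
    IsMarkedPair _ (f ∘ Equiv.swap c a) c a ∧ (f ∘ Equiv.swap c a) c = a
  rw [isMarkedPair_comp_swap_iff, comp_apply, Equiv.swap_apply_left]
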